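/- Let C be a regular category and consider a commutative diagram in which the top row (π₁ : X → A₁, π₂ : X → A₂) is a binary product diagram, the bottom row (π₁' : Y → B₁, π₂' : Y → B₂) is a binary product diagram, the vertical morphisms p₁ : A₁ → B₁, p : X → Y, p₂ : A₂ → B₂ are regular epimorphisms, and p₁∘π₁ = π₁'∘p and p₂∘π₂ = π₂'∘p. If X has global support, then both squares are pushouts. -/

import Mathlib

open CategoryTheory CategoryTheory.Limits

universe v u

variable {C : Type u} [Category.{v} C]

/-- `(p, q)` is a binary product diagram, exhibiting `X` as the product of `A` and `B`. -/
def IsBinaryProduct {X A B : C} (p : X ⟶ A) (q : X ⟶ B) : Prop :=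
  Nonempty (IsLimit (BinaryFan.mk p q))

/-- `p : X ⟶ A` is a product projection. -/
def IsProductProjection {X A : C} (p : X ⟶ A) : Prop :=
  ∃ (B : C) (q : X ⟶ B), IsBinaryProduct p q

/-- A pushout square whose two legs belong to the class `M`. -/
def IsMPushout (M : MorphismProperty C) {Z A B P : C}
    (f : Z ⟶ A) (g : Z ⟶ B) (a : A ⟶ P) (b : B ⟶ P) : Prop :=
  IsPushout f g a b ∧ M a ∧ M b

/-- `X` is an `M`-coextensive object. -/
structure MCoextensive (M : MorphismProperty C) (X : C) : Prop where
  pushout_exists : ∀ ⦃Y A : C⦄ (m : X ⟶ Y) (p : X ⟶ A), M m → IsProductProjection p →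
    ∃ (P : C) (a : A ⟶ P) (b : Y ⟶ P), IsMPushout M p m a b
  isBinaryProduct_iff : ∀ ⦃A₁ A₂ Y B₁ B₂ : C⦄ (π₁ : X ⟶ A₁) (π₂ : X ⟶ A₂)
    (f : X ⟶ Y) (p₁ : A₁ ⟶ B₁) (p₂ : A₂ ⟶ B₂) (π₁' : Y ⟶ B₁) (π₂' : Y ⟶ B₂),
    IsBinaryProduct π₁ π₂ → M f → M p₁ → M p₂ →
    π₁ ≫ p₁ = f ≫ π₁' → π₂ ≫ p₂ = f ≫ π₂' →
    (IsBinaryProduct π₁' π₂' ↔ (IsMPushout M π₁ f p₁ π₁' ∧ IsMPushout M π₂ f p₂ π₂'))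

/-- The class of product projections. -/
def projections (C : Type u) [Category.{v} C] : MorphismProperty C :=
  fun _ _ f => IsProductProjection f

/-- `X` is projection-coextensive. -/
def ProjectionCoextensive (X : C) : Prop := MCoextensive (projections C) X

/-- `f` is a regular epimorphism (a coequalizer of some parallel pair). -/
def IsRegularEpimorphism {X Y : C} (f : X ⟶ Y) : Prop :=
  ∃ (W : C) (a b : W ⟶ X) (h : a ≫ f = b ≫ f), Nonempty (IsColimit (Cofork.ofπ f h))

/-- The class of regular epimorphisms. -/
def regularEpis (C : Type u) [Category.{v} C] : MorphismProperty C :=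
  fun _ _ f => IsRegularEpimorphism f

/-- `X` is regularly-coextensive. -/
def RegularlyCoextensive (X : C) : Prop := MCoextensive (regularEpis C) X

/-- A regular category: finitely complete, coequalizers of kernel pairs, and
regular epimorphisms are stable under pullback. -/
class IsRegularCategory (C : Type u) [Category.{v} C] [HasFiniteLimits C] : Prop where
  hasCoequalizer_kernelPair : ∀ {X Y : C} (f : X ⟶ Y),
    HasCoequalizer (pullback.fst f f) (pullback.snd f f)
  regularEpi_stable : ∀ {X Y Z : C} (f : X ⟶ Y) (g : Z ⟶ Y),
    IsRegularEpimorphism f → IsRegularEpimorphism (pullback.snd f g)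

/-- `X` has global support: the unique morphism to the terminal object is a regular epi. -/
def HasGlobalSupport [HasTerminal C] (X : C) : Prop :=
  IsRegularEpimorphism (terminal.from X)

/-!
Two generalized elements `x`, `y` of `A₁` identified by `p₁` can be completed to generalized
elements `(x, z)`, `(y, z)` of `X = A₁ × A₂` sharing their second coordinate, and these are
identified by `p`. Hence a morphism out of `A₁` which, pulled back to `X`, factors through `p`
identifies `x` and `y`, so it factors through the regular epimorphism `p₁`. Global support is what
provides the coordinate `z`, after passing to an epimorphic cover of the domain of `x` and `y`.
-/

theorem IsRegularEpimorphism.isRegularEpi {X Y : C} {f : X ⟶ Y} (hf : IsRegularEpimorphism f) :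
    IsRegularEpi f :=
  let ⟨W, a, b, w, ⟨hc⟩⟩ := hf
  ⟨⟨W, a, b, w, hc⟩⟩

theorem IsRegularEpimorphism.epi {X Y : C} {f : X ⟶ Y} (hf : IsRegularEpimorphism f) : Epi f :=
  hf.isRegularEpi.getStruct.epi

namespace IsBinaryProduct

variable {X A B : C} {p : X ⟶ A} {q : X ⟶ B}

theorem symm (h : IsBinaryProduct p q) : IsBinaryProduct q p :=
  h.map BinaryFan.isLimitFlip

theorem exists_lift (h : IsBinaryProduct p q) {W : C} (f : W ⟶ A) (g : W ⟶ B) :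
    ∃ l : W ⟶ X, l ≫ p = f ∧ l ≫ q = g :=
  let ⟨hlim⟩ := h
  let ⟨l, hl⟩ := BinaryFan.IsLimit.lift' hlim f g
  ⟨l, hl⟩

theorem jointlyMono₂ (h : IsBinaryProduct p q) : JointlyMono₂ p q :=
  let ⟨hlim⟩ := h
  ⟨fun _ _ _ ↦ BinaryFan.IsLimit.hom_ext hlim⟩

end IsBinaryProduct

/-- `X` is inhabited locally for epimorphisms: every object `W` has an epimorphic cover mapping
to `X`. This is the consequence of global support that can be stated, and suffices, in a category
without limits. -/
def EpiLocallyInhabited (X : C) : Prop :=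
  ∀ W : C, ∃ (V : C) (e : V ⟶ W), Epi e ∧ Nonempty (V ⟶ X)

theorem EpiLocallyInhabited.of_hom {X Y : C} (hX : EpiLocallyInhabited X) (f : X ⟶ Y) :
    EpiLocallyInhabited Y := fun W ↦
  let ⟨V, e, he, ⟨x⟩⟩ := hX W
  ⟨V, e, he, ⟨x ≫ f⟩⟩

theorem HasGlobalSupport.epiLocallyInhabited [HasFiniteLimits C] [IsRegularCategory C] {X : C}
    (hX : HasGlobalSupport X) : EpiLocallyInhabited X := fun W ↦
  ⟨pullback (terminal.from X) (terminal.from W), pullback.snd _ _,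
    (IsRegularCategory.regularEpi_stable _ _ hX).epi, ⟨pullback.fst _ _⟩⟩

theorem isPushout_of_isRegularEpi {X A Y B : C} {f : X ⟶ A} {g : X ⟶ Y} {a : A ⟶ B} {b : Y ⟶ B}
    [IsRegularEpi a] [Epi g] (w : f ≫ a = g ≫ b)
    (h : ∀ ⦃T : C⦄ (s : A ⟶ T) (t : Y ⟶ T), f ≫ s = g ≫ t →
      ∀ ⦃W : C⦄ (x y : W ⟶ A), x ≫ a = y ≫ a → x ≫ s = y ≫ s) :
    IsPushout f g a b := by
  have exists_desc (c : PushoutCocone f g) : ∃ d : B ⟶ c.pt, a ≫ d = c.inl :=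
    ⟨_, IsRegularEpi.fac a c.inl (h c.inl c.inr c.condition _ _ (IsRegularEpi.w a))⟩
  choose desc fac using exists_desc
  refine ⟨⟨w⟩, ⟨PushoutCocone.IsColimit.mk w desc fac (fun c ↦ ?_) fun c m hm _ ↦ ?_⟩⟩
  · rw [← cancel_epi g, ← reassoc_of% w, fac, c.condition]
  · rw [← cancel_epi a, hm, fac]

section MorphismOfProducts

variable {X A₁ A₂ Y B₁ B₂ : C} {π₁ : X ⟶ A₁} {π₂ : X ⟶ A₂} {p₁ : A₁ ⟶ B₁} {p : X ⟶ Y}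
  {p₂ : A₂ ⟶ B₂} {π₁' : Y ⟶ B₁} {π₂' : Y ⟶ B₂}

theorem exists_epi_lift_of_comp_eq (htop : IsBinaryProduct π₁ π₂) (hbot : JointlyMono₂ π₁' π₂')
    (c₁ : π₁ ≫ p₁ = p ≫ π₁') (c₂ : π₂ ≫ p₂ = p ≫ π₂') (hA₂ : EpiLocallyInhabited A₂)
    {W : C} {x y : W ⟶ A₁} (hxy : x ≫ p₁ = y ≫ p₁) :
    ∃ (V : C) (e : V ⟶ W) (x' y' : V ⟶ X),
      Epi e ∧ x' ≫ π₁ = e ≫ x ∧ y' ≫ π₁ = e ≫ y ∧ x' ≫ p = y' ≫ p := by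
  obtain ⟨V, e, he, ⟨z⟩⟩ := hA₂ W
  obtain ⟨x', hx₁, hx₂⟩ := htop.exists_lift (e ≫ x) z
  obtain ⟨y', hy₁, hy₂⟩ := htop.exists_lift (e ≫ y) z
  refine ⟨V, e, x', y', he, hx₁, hy₁, hbot.right_cancellation _ _ ?_ ?_⟩
  · calc
      (x' ≫ p) ≫ π₁' = e ≫ x ≫ p₁ := by rw [Category.assoc, ← c₁, reassoc_of% hx₁]
      _ = e ≫ y ≫ p₁ := by rw [hxy]
      _ = (y' ≫ p) ≫ π₁' := by rw [Category.assoc, ← c₁, reassoc_of% hy₁]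
  · calc
      (x' ≫ p) ≫ π₂' = z ≫ p₂ := by rw [Category.assoc, ← c₂, reassoc_of% hx₂]
      _ = (y' ≫ p) ≫ π₂' := by rw [Category.assoc, ← c₂, reassoc_of% hy₂]

theorem isPushout_of_isBinaryProduct_of_jointlyMono₂ (htop : IsBinaryProduct π₁ π₂)
    (hbot : JointlyMono₂ π₁' π₂') [IsRegularEpi p₁] [Epi p]
    (c₁ : π₁ ≫ p₁ = p ≫ π₁') (c₂ : π₂ ≫ p₂ = p ≫ π₂') (hA₂ : EpiLocallyInhabited A₂) :
    IsPushout π₁ p p₁ π₁' := by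
  refine isPushout_of_isRegularEpi c₁ fun T s t hst W x y hxy ↦ ?_
  obtain ⟨V, e, x', y', he, hx, hy, hp⟩ := exists_epi_lift_of_comp_eq htop hbot c₁ c₂ hA₂ hxy
  rw [← cancel_epi e]
  calc
    e ≫ x ≫ s = x' ≫ p ≫ t := by rw [← reassoc_of% hx, hst]
    _ = y' ≫ p ≫ t := by rw [reassoc_of% hp]
    _ = e ≫ y ≫ s := by rw [← reassoc_of% hy, hst]

theorem regular_pushout_squares_general (htop : IsBinaryProduct π₁ π₂)
    (hbot : JointlyMono₂ π₁' π₂') (hp₁ : IsRegularEpimorphism p₁) (hp : Epi p)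
    (hp₂ : IsRegularEpimorphism p₂) (c₁ : π₁ ≫ p₁ = p ≫ π₁') (c₂ : π₂ ≫ p₂ = p ≫ π₂')
    (hX : EpiLocallyInhabited X) :
    IsPushout π₁ p p₁ π₁' ∧ IsPushout π₂ p p₂ π₂' := by
  have := hp₁.isRegularEpi
  have := hp₂.isRegularEpi
  have hbot' : JointlyMono₂ π₂' π₁' := ⟨fun _ f g h₂ h₁ ↦ hbot.right_cancellation f g h₁ h₂⟩
  exact ⟨isPushout_of_isBinaryProduct_of_jointlyMono₂ htop hbot c₁ c₂ (hX.of_hom π₂),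
    isPushout_of_isBinaryProduct_of_jointlyMono₂ htop.symm hbot' c₂ c₁ (hX.of_hom π₁)⟩

end MorphismOfProducts

/-- In a regular category, any morphism of binary product diagrams whose vertical
morphisms are regular epimorphisms and whose central object has global support
consists of two pushout squares. -/
theorem regular_pushout_squares
    {C : Type u} [Category.{v} C] [HasFiniteLimits C] [IsRegularCategory C]
    {X A₁ A₂ Y B₁ B₂ : C} (π₁ : X ⟶ A₁) (π₂ : X ⟶ A₂)
    (p₁ : A₁ ⟶ B₁) (p : X ⟶ Y) (p₂ : A₂ ⟶ B₂) (π₁' : Y ⟶ B₁) (π₂' : Y ⟶ B₂)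
    (htop : IsBinaryProduct π₁ π₂) (hbot : IsBinaryProduct π₁' π₂')
    (hp₁ : IsRegularEpimorphism p₁) (hp : IsRegularEpimorphism p)
    (hp₂ : IsRegularEpimorphism p₂)
    (c₁ : π₁ ≫ p₁ = p ≫ π₁') (c₂ : π₂ ≫ p₂ = p ≫ π₂')
    (hgs : HasGlobalSupport X) :
    IsPushout π₁ p p₁ π₁' ∧ IsPushout π₂ p p₂ π₂' :=
  regular_pushout_squares_general htop hbot.jointlyMono₂ hp₁ hp.epi hp₂ c₁ c₂
    hgs.epiLocallyInhabited
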